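/- arXiv:1201.1633 — 2 statements merged into one kernel-verified Lean document; each statement's English description precedes it below -/
import Mathlib

section
/- Let Σ be an alphabet with |Σ| ≥ 2 and let δ be a uniform integer-valued Hamming compatible metric on Σ*. Then δ(u,v) ≥ d_2(u,v) for all words u, v ∈ Σ*, where d_2(u,v) = H(ū,v̄) + ⌈|l(u) − l(v)|/2⌉. -/
/-- The truncated Hamming function `H(ū,v̄)`: the Hamming distance between the
first `min (l u) (l v)` letters of `u` and of `v` (computed via `zip`, which
truncates to the common length).  For words of equal length it is the usual
Hamming distance. -/
def hamming {α : Type*} [DecidableEq α] (u v : List α) : ℕ :=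
  (u.zip v).countP (fun p => decide (p.1 ≠ p.2))

/-- The metric `d₂(u,v) = H(ū,v̄) + ⌈|l(u) − l(v)|/2⌉`
(note `⌈m/2⌉ = (m + 1)/2` in natural-number division). -/
def d2 {α : Type*} [DecidableEq α] (u v : List α) : ℕ :=
  hamming u v + (Nat.dist u.length v.length + 1) / 2

/-!
Let `u` be at least as long as `v`. Some Hamming opposite `w` of `u` satisfies
`H(ū,v̄) + H(w̄,v̄) = l(v)`: where `u` and `v` differ, let `w` follow `v`. Then
`l(u) = δ(u,w) ≤ δ(u,v) + δ(w,v)`, and uniformity gives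
`δ(w,v) = δ(u,v) + H(w̄,v̄) - H(ū,v̄) = δ(u,v) + l(v) - 2 H(ū,v̄)`. Hence
`δ(u,v) ≥ H(ū,v̄) + (l(u) - l(v)) / 2`, and an integer-valued `δ` may be compared with the
half-integer rounded up.
-/

section Words

variable {A : Type*} [DecidableEq A]

theorem hamming_cons_cons (a b : A) (u v : List A) :
    hamming (a :: u) (b :: v) = hamming u v + if a ≠ b then 1 else 0 := by
  simp [hamming, List.countP_cons]

theorem hamming_comm (u v : List A) : hamming u v = hamming v u := by
  unfold hamming
  rw [← List.zip_swap v u, List.countP_map]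
  simp only [Function.comp_def, Prod.fst_swap, Prod.snd_swap, ne_comm]

/-- Hamming opposites: words of the same length that differ at every position. -/
def AreHammingOpposite (u v : List A) : Prop :=
  u.length = v.length ∧ hamming u v = u.length

theorem AreHammingOpposite.cons {a b : A} {u v : List A} (hab : a ≠ b)
    (huv : AreHammingOpposite u v) : AreHammingOpposite (a :: u) (b :: v) := by
  obtain ⟨hlength, hhamming⟩ := huv
  exact ⟨congrArg (· + 1) hlength, by simp [hamming_cons_cons, hhamming, hab]⟩

theorem exists_ne_and_eq_or_eq {α : Type*} [Nontrivial α] (a c : α) :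
    ∃ b, a ≠ b ∧ (a = c ∨ b = c) := by
  by_cases hac : a = c
  · obtain ⟨b, hb⟩ := exists_ne a
    exact ⟨b, hb.symm, .inl hac⟩
  · exact ⟨c, hac, .inr rfl⟩

theorem exists_areHammingOpposite_hamming_add_hamming_eq_length [Nontrivial A] :
    ∀ u v : List A, v.length ≤ u.length →
      ∃ w, AreHammingOpposite u w ∧ hamming u v + hamming w v = v.length
  | [], [], _ => ⟨[], ⟨rfl, rfl⟩, rfl⟩
  | a :: u, [], _ => by
    obtain ⟨w, huw, -⟩ :=
      exists_areHammingOpposite_hamming_add_hamming_eq_length u [] (Nat.zero_le _)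
    obtain ⟨b, hab⟩ := exists_ne a
    exact ⟨b :: w, huw.cons hab.symm, rfl⟩
  | a :: u, c :: v, hvu => by
    obtain ⟨w, huw, hsum⟩ :=
      exists_areHammingOpposite_hamming_add_hamming_eq_length u v (Nat.le_of_succ_le_succ hvu)
    obtain ⟨b, hab, hc⟩ := exists_ne_and_eq_or_eq a c
    refine ⟨b :: w, huw.cons hab, ?_⟩
    have hletter : (if a ≠ c then 1 else 0) + (if b ≠ c then 1 else 0) = 1 := by
      rcases hc with rfl | rfl
      · simp [hab.symm]
      · simp [hab]
    rw [hamming_cons_cons, hamming_cons_cons, List.length_cons]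
    omega

end Words

section Distance

variable {A R : Type*} [DecidableEq A] [CommSemiring R]

/-- Hamming compatibility of a distance function on words, with values in any semiring: it agrees
with the Hamming distance on words of equal length. -/
def IsHammingCompatible (δ : List A → List A → R) : Prop :=
  ∀ u v, u.length = v.length → δ u v = hamming u v

/-- Uniformity of a distance function `δ` on words: the correction term
`γ(u,w) = δ(u,w) - H(ū,w̄)` does not change when `u` is replaced by a Hamming opposite. The
equality `γ(u,w) = γ(v,w)` is written without subtraction. -/
def IsHammingUniform (δ : List A → List A → R) : Prop :=
  ∀ u v w, AreHammingOpposite u v → δ u w + hamming v w = δ v w + hamming u w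

variable [PartialOrder R] [Nontrivial A] {δ : List A → List A → R}

theorem IsHammingUniform.two_mul_hamming_add_length_le [IsOrderedRing R]
    (hunif : IsHammingUniform δ) (hsymm : ∀ u v, δ u v = δ v u)
    (htri : ∀ u v w, δ u v ≤ δ u w + δ w v) (hcompat : IsHammingCompatible δ)
    {u v : List A} (hvu : v.length ≤ u.length) :
    2 * (hamming u v : R) + u.length ≤ 2 * δ u v + v.length := by
  obtain ⟨w, huw, hsum⟩ := exists_areHammingOpposite_hamming_add_hamming_eq_length u v hvu
  have hlength : (u.length : R) ≤ δ u v + δ w v :=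
    calc
      (u.length : R) = δ u w := by rw [hcompat u w huw.1, huw.2]
      _ ≤ δ u v + δ w v := hsymm v w ▸ htri u w v
  calc
    2 * (hamming u v : R) + u.length ≤ 2 * hamming u v + (δ u v + δ w v) := by gcongr
    _ = hamming u v + δ u v + (δ w v + hamming u v) := by ring
    _ = hamming u v + δ u v + (δ u v + hamming w v) := by rw [hunif u w v huw]
    _ = 2 * δ u v + (hamming u v + hamming w v : ℕ) := by push_cast; ring
    _ = 2 * δ u v + v.length := by rw [hsum]

theorem IsHammingUniform.two_mul_hamming_add_dist_length_le [IsStrictOrderedRing R]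
    (hunif : IsHammingUniform δ) (hsymm : ∀ u v, δ u v = δ v u)
    (htri : ∀ u v w, δ u v ≤ δ u w + δ w v) (hcompat : IsHammingCompatible δ) (u v : List A) :
    2 * (hamming u v : R) + Nat.dist u.length v.length ≤ 2 * δ u v := by
  wlog hvu : v.length ≤ u.length generalizing u v
  · rw [hamming_comm, Nat.dist_comm, hsymm]
    exact this v u (Nat.le_of_not_ge hvu)
  have hdist : Nat.dist u.length v.length + v.length = u.length := by
    rw [Nat.dist_eq_sub_of_le_right hvu, Nat.sub_add_cancel hvu]
  apply le_of_add_le_add_right (a := (v.length : R))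
  rw [add_assoc, ← Nat.cast_add, hdist]
  exact hunif.two_mul_hamming_add_length_le hsymm htri hcompat hvu

end Distance

theorem stmt_13_general {A : Type*} [DecidableEq A] [Nontrivial A] (δ : List A → List A → ℕ)
    (hsymm : ∀ u v, δ u v = δ v u) (htri : ∀ u v w, δ u v ≤ δ u w + δ w v)
    (hcompat : IsHammingCompatible δ) (hunif : IsHammingUniform δ) (u v : List A) :
    d2 u v ≤ δ u v := by
  have hbound := hunif.two_mul_hamming_add_dist_length_le hsymm htri hcompat u v
  simp only [Nat.cast_id] at hbound
  unfold d2
  omega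

theorem stmt_13 {A : Type*} [DecidableEq A] [Fintype A]
    (hA : 2 ≤ Fintype.card A)
    (δ : List A → List A → ℕ)
    -- δ is a metric on Σ*
    (hrefl : ∀ u v : List A, δ u v = 0 ↔ u = v)
    (hsymm : ∀ u v : List A, δ u v = δ v u)
    (htri : ∀ u v w : List A, δ u v ≤ δ u w + δ w v)
    -- δ is Hamming compatible
    (hcompat : ∀ u v : List A, u.length = v.length → δ u v = hamming u v)
    -- δ is uniform: writing δ(u,w) = H(ū,w̄) + γ(u,w), for Hamming opposites
    -- u, v and any word w we have γ(u,w) = γ(v,w); stated additively to avoid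
    -- truncated subtraction.
    (hunif : ∀ u v w : List A, u.length = v.length → hamming u v = u.length →
      δ u w + hamming v w = δ v w + hamming u w) :
    ∀ u v : List A, d2 u v ≤ δ u v := by
  have : Nontrivial A := Fintype.one_lt_card_iff_nontrivial.mp hA
  exact stmt_13_general δ hsymm htri hcompat fun u v w huv ↦ hunif u v w huv.1 huv.2
end

section
/- Let Σ be an alphabet with |Σ| ≥ 2 and let δ be any integer-valued Hamming compatible metric on Σ* (no uniformity assumed). For all words u, w ∈ Σ* with l(u) ≥ l(w), there exists a Hamming opposite v of u satisfying H(ū,w̄) + H(v̄,w̄) = l(w), such that δ(u,w) ≥ d_2(u,w) or δ(v,w) ≥ d_2(v,w). In particular, for every word w and every n ≥ l(w) there exists a word u of length n with δ(u,w) ≥ d_2(u,w). -/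
/-! If `u` and `v` are Hamming opposites of length `n`, the triangle inequality through `w` gives
`n ≤ δ u w + δ v w`. When the truncated Hamming distances of `u` and `v` to `w` add up to `l(w)`,
the two `d₂`-distances add up to `l(w) + 2 ⌈(n - l(w)) / 2⌉ ≤ n + 1`. So the two `δ`-distances
cannot both be smaller than the corresponding `d₂`-distances: being integers, their sum would be
at most `n - 1`. -/

section

variable {A : Type*} [DecidableEq A]

theorem hamming_nil_right (u : List A) : hamming u [] = 0 := by
  simp [hamming]

/-- Hamming opposites: words of equal length that differ at every position. The equality of lengths
is a separate condition because `hamming` ignores the letters beyond the shorter word. -/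
def IsHammingOpposite (u v : List A) : Prop :=
  v.length = u.length ∧ hamming u v = u.length

namespace IsHammingOpposite

theorem nil : IsHammingOpposite ([] : List A) [] :=
  ⟨rfl, rfl⟩

theorem cons {a b : A} {u v : List A} (hab : a ≠ b) (huv : IsHammingOpposite u v) :
    IsHammingOpposite (a :: u) (b :: v) :=
  ⟨congrArg (· + 1) huv.1, by rw [hamming_cons_cons, huv.2, if_pos hab, List.length_cons]⟩

end IsHammingOpposite

theorem hamming_add_hamming_cons {a b c : A} {u v w : List A} (hab : a ≠ b)
    (hc : a = c ∨ b = c) (hadd : hamming u w + hamming v w = w.length) :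
    hamming (a :: u) (c :: w) + hamming (b :: v) (c :: w) = (c :: w).length := by
  rw [hamming_cons_cons, hamming_cons_cons, List.length_cons]
  rcases hc with rfl | rfl
  · rw [if_neg (not_not.mpr rfl), if_pos hab.symm]
    omega
  · rw [if_pos hab, if_neg (not_not.mpr rfl)]
    omega

theorem exists_isHammingOpposite_hamming_add_hamming [Nontrivial A] {u w : List A}
    (hwu : w.length ≤ u.length) :
    ∃ v, IsHammingOpposite u v ∧ hamming u w + hamming v w = w.length := by
  induction u generalizing w with
  | nil =>
    obtain rfl := List.eq_nil_of_length_eq_zero (Nat.le_zero.mp hwu)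
    exact ⟨[], .nil, rfl⟩
  | cons a u ih =>
    cases w with
    | nil =>
      obtain ⟨b, hba⟩ := exists_ne a
      obtain ⟨v, huv, -⟩ := ih (w := []) (Nat.zero_le _)
      exact ⟨b :: v, huv.cons hba.symm, by simp only [hamming_nil_right, List.length_nil]⟩
    | cons c w =>
      obtain ⟨b, hab, hc⟩ := exists_ne_and_eq_or_eq a c
      obtain ⟨v, huv, hadd⟩ := ih (Nat.le_of_succ_le_succ hwu)
      exact ⟨b :: v, huv.cons hab, hamming_add_hamming_cons hab hc hadd⟩

theorem d2_add_d2_le {u v w : List A} (hlen : v.length = u.length) (hwu : w.length ≤ u.length)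
    (hadd : hamming u w + hamming v w = w.length) :
    d2 u w + d2 v w ≤ u.length + 1 := by
  simp only [d2, hlen, Nat.dist_eq_sub_of_le_right hwu]
  omega

theorem IsHammingOpposite.length_le_add {u v : List A} (huv : IsHammingOpposite u v)
    {δ : List A → List A → ℕ} (hsymm : ∀ u v, δ u v = δ v u)
    (htri : ∀ u v w, δ u v ≤ δ u w + δ w v)
    (hle : ∀ u v : List A, u.length = v.length → hamming u v ≤ δ u v) (w : List A) :
    u.length ≤ δ u w + δ v w :=
  calc
    u.length = hamming u v := huv.2.symm
    _ ≤ δ u v := hle u v huv.1.symm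
    _ ≤ δ u w + δ w v := htri u v w
    _ = δ u w + δ v w := by rw [hsymm w v]

theorem exists_isHammingOpposite_d2_le_or_d2_le [Nontrivial A] {δ : List A → List A → ℕ}
    (hsymm : ∀ u v, δ u v = δ v u) (htri : ∀ u v w, δ u v ≤ δ u w + δ w v)
    (hle : ∀ u v : List A, u.length = v.length → hamming u v ≤ δ u v)
    {u w : List A} (hwu : w.length ≤ u.length) :
    ∃ v, IsHammingOpposite u v ∧ hamming u w + hamming v w = w.length ∧
      (d2 u w ≤ δ u w ∨ d2 v w ≤ δ v w) := by
  obtain ⟨v, huv, hadd⟩ := exists_isHammingOpposite_hamming_add_hamming hwu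
  have hδ : u.length ≤ δ u w + δ v w := huv.length_le_add hsymm htri hle w
  have hd2 : d2 u w + d2 v w ≤ u.length + 1 := d2_add_d2_le huv.1 hwu hadd
  exact ⟨v, huv, hadd, by omega⟩

theorem exists_length_eq_d2_le [Nontrivial A] {δ : List A → List A → ℕ}
    (hsymm : ∀ u v, δ u v = δ v u) (htri : ∀ u v w, δ u v ≤ δ u w + δ w v)
    (hle : ∀ u v : List A, u.length = v.length → hamming u v ≤ δ u v)
    {w : List A} {n : ℕ} (hwn : w.length ≤ n) :
    ∃ u : List A, u.length = n ∧ d2 u w ≤ δ u w := by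
  obtain ⟨a⟩ : Nonempty A := inferInstance
  have hlen : (List.replicate n a).length = n := List.length_replicate
  obtain ⟨v, huv, -, hu | hv⟩ :=
    exists_isHammingOpposite_d2_le_or_d2_le hsymm htri hle (hwn.trans_eq hlen.symm)
  · exact ⟨List.replicate n a, hlen, hu⟩
  · exact ⟨v, huv.1.trans hlen, hv⟩

theorem stmt_14_general [Nontrivial A] (δ : List A → List A → ℕ)
    (hsymm : ∀ u v : List A, δ u v = δ v u)
    (htri : ∀ u v w : List A, δ u v ≤ δ u w + δ w v)
    (hle : ∀ u v : List A, u.length = v.length → hamming u v ≤ δ u v) :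
    (∀ u w : List A, w.length ≤ u.length →
      ∃ v : List A, v.length = u.length ∧ hamming u v = u.length ∧
        hamming u w + hamming v w = w.length ∧
        (d2 u w ≤ δ u w ∨ d2 v w ≤ δ v w)) ∧
    ∀ (w : List A) (n : ℕ), w.length ≤ n →
      ∃ u : List A, u.length = n ∧ d2 u w ≤ δ u w := by
  refine ⟨fun u w hwu => ?_, fun w n hwn => exists_length_eq_d2_le hsymm htri hle hwn⟩
  obtain ⟨v, ⟨hlen, hopp⟩, hadd, hd2⟩ :=
    exists_isHammingOpposite_d2_le_or_d2_le hsymm htri hle hwu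
  exact ⟨v, hlen, hopp, hadd, hd2⟩

end

theorem stmt_14 {A : Type*} [DecidableEq A] [Fintype A]
    (hA : 2 ≤ Fintype.card A)
    (δ : List A → List A → ℕ)
    -- δ is a metric on Σ*
    (hrefl : ∀ u v : List A, δ u v = 0 ↔ u = v)
    (hsymm : ∀ u v : List A, δ u v = δ v u)
    (htri : ∀ u v w : List A, δ u v ≤ δ u w + δ w v)
    -- δ is Hamming compatible
    (hcompat : ∀ u v : List A, u.length = v.length → δ u v = hamming u v) :
    (∀ u w : List A, w.length ≤ u.length →
      ∃ v : List A, v.length = u.length ∧ hamming u v = u.length ∧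
        hamming u w + hamming v w = w.length ∧
        (d2 u w ≤ δ u w ∨ d2 v w ≤ δ v w)) ∧
    ∀ (w : List A) (n : ℕ), w.length ≤ n →
      ∃ u : List A, u.length = n ∧ d2 u w ≤ δ u w := by
  have : Nontrivial A := Fintype.one_lt_card_iff_nontrivial.mp hA
  exact stmt_14_general δ hsymm htri fun u v huv => (hcompat u v huv).ge
end
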